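/- arXiv:1801.10436 — 2 statements merged into one kernel-verified Lean document; each statement's English description precedes it below -/
import Mathlib

section
/- Let P = (Q,Σ,δ) be a carefully synchronizing PFA with |Q| = n and |Σ| = m whose shortest carefully synchronizing word has length f. Assume s ∈ Σ and Q' ⊆ Q satisfy: (1) s is a complete symbol (qs is defined for all q ∈ Q) and there is a number p such that every symbol of Σ is defined on every state of Qs^p; (2) qs = q for all q ∈ Q'; (3) qa = qb (both defined or both undefined, and equal when defined) for all q ∈ Q' and all a, b ∈ Σ∖{s}. Let n' = n − |Q'|. Then there exists a carefully synchronizing PFA on n + n'·(m−2) states over a 2-symbol alphabet whose shortest carefully synchronizing word has length at least f; moreover the new PFA can be taken deterministic if P is deterministic, and transitive if P is transitive. -/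
/-- One step of a PFA on an `Option` state. -/
def pfaStep {Q σ : Type*} (δ : Q → σ → Option Q) (o : Option Q) (a : σ) : Option Q :=
  o.bind fun q => δ q a

/-- The (partial) state reached from `q` after reading word `w` in the PFA `δ`. -/
def pfaRun {Q σ : Type*} (δ : Q → σ → Option Q) (q : Q) (w : List σ) : Option Q :=
  w.foldl (pfaStep δ) (some q)

/-- A word `w` is carefully synchronizing for the PFA `δ`. -/
def IsCareSyncWord {Q σ : Type*} (δ : Q → σ → Option Q) (w : List σ) : Prop :=
  ∃ qs : Q, ∀ q : Q, pfaRun δ q w = some qs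

/-- A PFA is transitive if every state can be reached from every state by some word. -/
def PFATransitive {Q σ : Type*} (δ : Q → σ → Option Q) : Prop :=
  ∀ q q' : Q, ∃ w : List σ, pfaRun δ q w = some q'

section Run

variable {Q σ : Type*} (δ : Q → σ → Option Q)

theorem pfaRun_append (q : Q) (u v : List σ) :
    pfaRun δ q (u ++ v) = (pfaRun δ q u).bind fun r => pfaRun δ r v := by
  have foldl_none : ∀ w : List σ, w.foldl (pfaStep δ) none = none := by
    intro w
    induction w with
    | nil => rfl
    | cons a w ih => simpa [pfaStep] using ih
  unfold pfaRun
  rw [List.foldl_append]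
  cases u.foldl (pfaStep δ) (some q) with
  | none => simpa using foldl_none v
  | some r => rfl

theorem pfaRun_singleton (q : Q) (a : σ) : pfaRun δ q [a] = δ q a := rfl

theorem pfaRun_cons (q : Q) (a : σ) (w : List σ) :
    pfaRun δ q (a :: w) = (δ q a).bind fun r => pfaRun δ r w :=
  pfaRun_append δ q [a] w

variable {δ} in
theorem pfaRun_append_of_eq_some {q r : Q} {u : List σ} (h : pfaRun δ q u = some r)
    (v : List σ) : pfaRun δ q (u ++ v) = pfaRun δ r v := by
  rw [pfaRun_append, h, Option.bind_some]

variable {δ} in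
theorem pfaRun_replicate {s : σ} {t : Q → Q} (ht : ∀ q, δ q s = some (t q)) (k : ℕ) (q : Q) :
    pfaRun δ q (List.replicate k s) = some (t^[k] q) := by
  induction k generalizing q with
  | zero => rfl
  | succ k ih => rw [List.replicate_succ, pfaRun_cons, ht, Option.bind_some, ih,
      Function.iterate_succ_apply]

end Run

/-- The two-symbol PFA `ε` on `S` encodes `δ`: the state `e q i` stands for `q` together with a
counter value `i ≤ K`. Symbol `0` advances the counter, and at the value `K` it applies `s` (acting
as the total map `t`) and resets the counter; symbol `1` applies `a i` and resets the counter. -/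
structure CounterEncoding {Q σ S : Type*} (δ : Q → σ → Option Q) (ε : S → Fin 2 → Option S)
    (e : Q → ℕ → S) (K : ℕ) (s : σ) (t : Q → Q) (a : ℕ → σ) : Prop where
  map_s : ∀ q, δ q s = some (t q)
  surj : ∀ x, ∃ q i, i ≤ K ∧ e q i = x
  inj : ∀ {q r i j}, e q i = e r j → q = r
  exhaust : ∀ b, b = s ∨ ∃ i ≤ K, a i = b
  advance : ∀ q i, i < K → ε (e q i) 0 = some (e q (i + 1))
  wrap : ∀ q, ε (e q K) 0 = some (e (t q) 0)
  act : ∀ q i, i ≤ K → ε (e q i) 1 = (δ q (a i)).map (e · 0)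

namespace CounterEncoding

variable {Q σ S : Type*} {δ : Q → σ → Option Q} {ε : S → Fin 2 → Option S}
  {e : Q → ℕ → S} {K : ℕ} {s : σ} {t : Q → Q} {a : ℕ → σ}

theorem run_advance (h : CounterEncoding δ ε e K s t a) (q : Q) (i k : ℕ) (hk : i + k ≤ K) :
    pfaRun ε (e q i) (List.replicate k 0) = some (e q (i + k)) := by
  induction k generalizing i with
  | zero => rfl
  | succ k ih =>
    rw [List.replicate_succ, pfaRun_cons, h.advance q i (by lia), Option.bind_some,
      ih (i + 1) (by lia), show i + 1 + k = i + (k + 1) by lia]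

theorem run_wrap (h : CounterEncoding δ ε e K s t a) (q : Q) (i : ℕ) (hi : i ≤ K) :
    pfaRun ε (e q i) (List.replicate (K - i) 0 ++ [0]) = some (e (t q) 0) := by
  rw [pfaRun_append_of_eq_some (h.run_advance q i (K - i) (by lia)), pfaRun_singleton,
    Nat.add_sub_cancel' hi, h.wrap]

theorem run_cycle (h : CounterEncoding δ ε e K s t a) (q : Q) (i : ℕ) (hi : i ≤ K) :
    pfaRun ε (e q i) (List.replicate (K + 1) 0) = some (e (t q) i) := by
  have hsplit : List.replicate (K + 1) (0 : Fin 2) =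
      (List.replicate (K - i) 0 ++ [0]) ++ List.replicate i 0 := by
    rw [← List.replicate_succ', ← List.replicate_add]
    congr 1
    lia
  rw [hsplit, pfaRun_append_of_eq_some (h.run_wrap q i hi), h.run_advance _ 0 i (by lia),
    Nat.zero_add]

/-- A power of the symbol `0` acts as `s ^ p`, whatever the counter value. -/
theorem exists_run_iterate (h : CounterEncoding δ ε e K s t a) (p : ℕ) :
    ∃ u, ∀ q i, i ≤ K → pfaRun ε (e q i) u = some (e (t^[p] q) i) := by
  induction p with
  | zero => exact ⟨[], fun _ _ _ => rfl⟩
  | succ p ih =>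
    obtain ⟨u, hu⟩ := ih
    refine ⟨List.replicate (K + 1) 0 ++ u, fun q i hi => ?_⟩
    rw [pfaRun_append_of_eq_some (h.run_cycle q i hi), hu _ _ hi, Function.iterate_succ_apply]

theorem exists_run_symbol (h : CounterEncoding δ ε e K s t a) (b : σ) :
    ∃ u, ∀ q, pfaRun ε (e q 0) u = (δ q b).map (e · 0) := by
  obtain rfl | ⟨i, hi, rfl⟩ := h.exhaust b
  · exact ⟨_, fun q => by rw [h.map_s]; exact h.run_wrap q 0 (Nat.zero_le K)⟩
  · refine ⟨List.replicate i 0 ++ [1], fun q => ?_⟩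
    rw [pfaRun_append_of_eq_some (h.run_advance q 0 i (by lia)), pfaRun_singleton, Nat.zero_add,
      h.act q i hi]

/-- Every word of `δ` is simulated by a word of `ε` on the states with counter value `0`. -/
theorem exists_run_word (h : CounterEncoding δ ε e K s t a) (v : List σ) :
    ∃ w, ∀ q, pfaRun ε (e q 0) w = (pfaRun δ q v).map (e · 0) := by
  induction v with
  | nil => exact ⟨[], fun _ => rfl⟩
  | cons b v ih =>
    obtain ⟨w, hw⟩ := ih
    obtain ⟨u, hu⟩ := h.exists_run_symbol b
    refine ⟨u ++ w, fun q => ?_⟩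
    rw [pfaRun_append, pfaRun_cons, hu]
    cases δ q b with
    | none => rfl
    | some r => exact hw r

/-- From a common counter value, every word of `ε` acts as a word of `δ` that is no longer. -/
theorem exists_decode (h : CounterEncoding δ ε e K s t a) (w : List (Fin 2)) (i : ℕ)
    (hi : i ≤ K) : ∃ v : List σ, v.length ≤ w.length ∧
      ∃ j, ∀ q, pfaRun ε (e q i) w = (pfaRun δ q v).map (e · j) := by
  induction w generalizing i with
  | nil => exact ⟨[], le_rfl, i, fun _ => rfl⟩
  | cons c w ih =>
    match c with
    | 0 =>
      obtain hlt | rfl := hi.lt_or_eq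
      · obtain ⟨v, hv, j, hj⟩ := ih (i + 1) hlt
        refine ⟨v, hv.trans (Nat.le_succ _), j, fun q => ?_⟩
        rw [pfaRun_cons, h.advance q i hlt, Option.bind_some, hj]
      · obtain ⟨v, hv, j, hj⟩ := ih 0 (Nat.zero_le _)
        refine ⟨s :: v, Nat.succ_le_succ hv, j, fun q => ?_⟩
        rw [pfaRun_cons, pfaRun_cons, h.wrap, h.map_s, Option.bind_some, Option.bind_some, hj]
    | 1 =>
      obtain ⟨v, hv, j, hj⟩ := ih 0 (Nat.zero_le _)
      refine ⟨a i :: v, Nat.succ_le_succ hv, j, fun q => ?_⟩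
      rw [pfaRun_cons, pfaRun_cons, h.act q i hi]
      cases δ q (a i) with
      | none => rfl
      | some r => exact hj r

theorem exists_isCareSyncWord (h : CounterEncoding δ ε e K s t a) {p : ℕ}
    (hp : ∀ q b, (δ (t^[p] q) b).isSome) {v : List σ} (hv : IsCareSyncWord δ v) :
    ∃ w, IsCareSyncWord ε w := by
  obtain ⟨r₀, hr₀⟩ := hv
  obtain ⟨u, hu⟩ := h.exists_run_iterate p
  obtain ⟨w, hw⟩ := h.exists_run_word v
  refine ⟨u ++ 1 :: w, e r₀ 0, fun x => ?_⟩
  obtain ⟨q, i, hi, rfl⟩ := h.surj x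
  obtain ⟨r, hr⟩ := Option.isSome_iff_exists.1 (hp q (a i))
  rw [pfaRun_append_of_eq_some (hu q i hi), pfaRun_cons, h.act _ i hi, hr, Option.map_some,
    Option.bind_some, hw, hr₀, Option.map_some]

theorem exists_isCareSyncWord_length_le (h : CounterEncoding δ ε e K s t a) {w : List (Fin 2)}
    (hw : IsCareSyncWord ε w) : ∃ v, IsCareSyncWord δ v ∧ v.length ≤ w.length := by
  obtain ⟨x, hx⟩ := hw
  obtain ⟨v, hv, j, hj⟩ := h.exists_decode w 0 (Nat.zero_le K)
  obtain ⟨q₀, i₀, -, rfl⟩ := h.surj x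
  refine ⟨v, ⟨q₀, fun q => ?_⟩, hv⟩
  obtain ⟨r, hr, hre⟩ := Option.map_eq_some_iff.1 ((hj q).symm.trans (hx (e q 0)))
  rw [hr, h.inj hre]

theorem isSome (h : CounterEncoding δ ε e K s t a) (hδ : ∀ q b, (δ q b).isSome) (x : S)
    (c : Fin 2) : (ε x c).isSome := by
  obtain ⟨q, i, hi, rfl⟩ := h.surj x
  match c with
  | 0 =>
    obtain hlt | rfl := hi.lt_or_eq
    · rw [h.advance q i hlt, Option.isSome_some]
    · rw [h.wrap, Option.isSome_some]
  | 1 => rw [h.act q i hi, Option.isSome_map, hδ]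

theorem transitive (h : CounterEncoding δ ε e K s t a) (hδ : PFATransitive δ) :
    PFATransitive ε := by
  intro x y
  obtain ⟨q, i, hi, rfl⟩ := h.surj x
  obtain ⟨r, j, hj, rfl⟩ := h.surj y
  obtain ⟨v, hv⟩ := hδ (t q) r
  obtain ⟨w, hw⟩ := h.exists_run_word v
  have hr : pfaRun ε (e (t q) 0) w = some (e r 0) := by rw [hw, hv, Option.map_some]
  refine ⟨(List.replicate (K - i) 0 ++ [0]) ++ (w ++ List.replicate j 0), ?_⟩
  rw [pfaRun_append_of_eq_some (h.run_wrap q i hi), pfaRun_append_of_eq_some hr,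
    h.run_advance r 0 j (by lia), Nat.zero_add]

end CounterEncoding

/-- There are representatives `e q i` of the states `q` with counter values `i ≤ K`, where the
counter is forgotten on `A`. -/
theorem exists_counter_states {Q : Type*} [Fintype Q] [DecidableEq Q] (A : Finset Q) (K : ℕ) :
    ∃ e : Q → ℕ → Fin (Fintype.card Q + (Fintype.card Q - A.card) * K),
      (∀ x, ∃ q i, i ≤ K ∧ e q i = x) ∧
      (∀ q ∈ A, ∀ i j, e q i = e q j) ∧
      (∀ q r i j, e q i = e r j → q = r) ∧
      ∀ q ∉ A, ∀ i ≤ K, ∀ j ≤ K, e q i = e q j → i = j := by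
  have hcard : Fintype.card ({q // q ∈ A} ⊕ ({q // q ∉ A} × Fin (K + 1))) =
      Fintype.card Q + (Fintype.card Q - A.card) * K := by
    have hle := A.card_le_univ
    simp only [Fintype.card_sum, Fintype.card_prod, Fintype.card_fin, Fintype.card_coe,
      Fintype.card_subtype_compl]
    rw [Nat.mul_succ]
    lia
  let φ := Fintype.equivFinOfCardEq hcard
  refine ⟨fun q i => φ (if hq : q ∈ A then .inl ⟨q, hq⟩ else .inr (⟨q, hq⟩, Fin.ofNat (K + 1) i)),
    fun x => ?_, fun q hq i j => ?_, fun q r i j hqr => ?_, fun q hq i hi j hj hij => ?_⟩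
  · obtain ⟨y, rfl⟩ := φ.surjective x
    obtain ⟨q, hq⟩ | ⟨⟨q, hq⟩, i⟩ := y
    · exact ⟨q, 0, Nat.zero_le K, by simp [hq]⟩
    · exact ⟨q, i, Nat.le_of_lt_succ i.isLt, by simp [hq]⟩
  · simp [hq]
  · have hqr := φ.injective hqr
    split_ifs at hqr <;> simp_all
  · have hij := φ.injective hij
    simpa [hq, Fin.ext_iff, Nat.mod_eq_of_lt (Nat.lt_succ_of_le hi),
      Nat.mod_eq_of_lt (Nat.lt_succ_of_le hj)] using hij

/-- The symbols other than `s` can be enumerated, up to repetitions of `s` when there are none. -/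
theorem exists_enumeration_ne {σ : Type*} [Fintype σ] (s : σ) :
    ∃ a : ℕ → σ, (∀ b, b = s ∨ ∃ i ≤ Fintype.card σ - 2, a i = b) ∧
      ((∀ i ≤ Fintype.card σ - 2, a i = s) ∨ ∀ i ≤ Fintype.card σ - 2, a i ≠ s) := by
  classical
  have hcard : Fintype.card {b // b ≠ s} = Fintype.card σ - 1 := by
    simp [Fintype.card_subtype_compl]
  let φ := Fintype.equivFinOfCardEq hcard
  refine ⟨fun i => if hi : i < Fintype.card σ - 1 then φ.symm ⟨i, hi⟩ else s, fun b => ?_, ?_⟩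
  · refine or_iff_not_imp_left.2 fun hb => ⟨φ ⟨b, hb⟩, ?_, by simp⟩
    have := (φ ⟨b, hb⟩).isLt
    lia
  · by_cases h : Fintype.card σ - 1 = 0
    · exact .inl fun i _ => by simp [h]
    · refine .inr fun i hi => ?_
      have hi : i < Fintype.card σ - 1 := by lia
      simpa [hi] using (φ.symm ⟨i, hi⟩).2

theorem exists_counterEncoding {Q σ : Type*} [Fintype Q] [DecidableEq Q] [Fintype σ]
    (δ : Q → σ → Option Q) (s : σ) (t : Q → Q) (A : Finset Q) (ht : ∀ q, δ q s = some (t q))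
    (hAs : ∀ q ∈ A, t q = q) (hA : ∀ q ∈ A, ∀ a b, a ≠ s → b ≠ s → δ q a = δ q b) :
    ∃ (ε : Fin (Fintype.card Q + (Fintype.card Q - A.card) * (Fintype.card σ - 2)) → Fin 2 →
        Option (Fin (Fintype.card Q + (Fintype.card Q - A.card) * (Fintype.card σ - 2))))
      (e : _) (a : ℕ → σ), CounterEncoding δ ε e (Fintype.card σ - 2) s t a := by
  obtain ⟨a, ha, has⟩ := exists_enumeration_ne s
  obtain ⟨e, hsurj, hforget, hinj, hinj'⟩ := exists_counter_states A (Fintype.card σ - 2)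
  generalize Fintype.card σ - 2 = K at *
  have hconst : ∀ q ∈ A, ∀ i ≤ K, ∀ j ≤ K, δ q (a i) = δ q (a j) := by
    intro q hq i hi j hj
    obtain has | has := has
    · rw [has i hi, has j hj]
    · exact hA q hq _ _ (has i hi) (has j hj)
  choose π κ hκ hπκ using hsurj
  have hπ : ∀ q i, π (e q i) = q := fun q i => hinj _ _ _ _ (hπκ (e q i))
  have hcounter : ∀ q i, i ≤ K → q ∉ A → κ (e q i) = i := fun q i hi hq =>
    hinj' q hq _ (hκ _) i hi (by simpa only [hπ] using hπκ (e q i))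
  refine ⟨fun x c => if c = 0 then
      (if κ x < K then some (e (π x) (κ x + 1)) else some (e (t (π x)) 0))
    else (δ (π x) (a (κ x))).map (e · 0), e, a, ht,
    fun x => ⟨π x, κ x, hκ x, hπκ x⟩, fun h => hinj _ _ _ _ h, ha, fun q i hi => ?_,
    fun q => ?_, fun q i hi => ?_⟩
  · by_cases hq : q ∈ A
    · simp only [hπ, hAs q hq, if_true, hforget q hq _ 0, ite_self]
    · simp [hπ, hcounter q i hi.le hq, hi]
  · by_cases hq : q ∈ A
    · simp only [hπ, hAs q hq, if_true, hforget q hq _ 0, ite_self]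
    · simp [hπ, hcounter q K le_rfl hq]
  · by_cases hq : q ∈ A
    · simp [hπ, hconst q hq _ (hκ (e q i)) i hi]
    · simp [hπ, hcounter q i hi hq]

/-- Reduction to two symbols: if `P = (Q,Σ,δ)` is a carefully synchronizing PFA with
`n` states, `m` symbols and shortest carefully synchronizing word length `f`, and
`s ∈ Σ`, `Q' ⊆ Q` satisfy
(1) `s` is complete and all symbols are defined on `Qs^p` for some `p`,
(2) `qs = q` for all `q ∈ Q'`,
(3) `qa = qb` for all `q ∈ Q'` and all `a, b ∈ Σ∖{s}`,
then with `n' = n − |Q'|` there is a carefully synchronizing PFA on `n + n'·(m−2)`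
states and two symbols with shortest carefully synchronizing word length at least `f`,
which is deterministic and/or transitive if `P` is. -/
theorem reduction_to_two_symbols {Q σ : Type*} [Fintype Q] [DecidableEq Q] [Fintype σ]
    (δ : Q → σ → Option Q) (n m : ℕ)
    (hn : Fintype.card Q = n) (hm : Fintype.card σ = m)
    (f : ℕ) (w₀ : List σ) (hw₀ : IsCareSyncWord δ w₀) (hw₀len : w₀.length = f)
    (hmin : ∀ w : List σ, IsCareSyncWord δ w → f ≤ w.length)
    (s : σ) (Q' : Finset Q) (p : ℕ)
    (hcomplete : ∀ q : Q, (δ q s).isSome)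
    (hp : ∀ q q' : Q, ∀ a : σ,
      pfaRun δ q (List.replicate p s) = some q' → (δ q' a).isSome)
    (hQ's : ∀ q ∈ Q', δ q s = some q)
    (hQ'ab : ∀ q ∈ Q', ∀ a b : σ, a ≠ s → b ≠ s → δ q a = δ q b)
    (n' : ℕ) (hn' : n' = n - Q'.card) :
    ∃ δ₂ : Fin (n + n' * (m - 2)) → Fin 2 → Option (Fin (n + n' * (m - 2))),
      (∃ w : List (Fin 2), IsCareSyncWord δ₂ w) ∧
      (∀ w : List (Fin 2), IsCareSyncWord δ₂ w → f ≤ w.length) ∧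
      ((∀ (q : Q) (a : σ), (δ q a).isSome) → ∀ (q₂ : Fin (n + n' * (m - 2))) (x : Fin 2),
        (δ₂ q₂ x).isSome) ∧
      (PFATransitive δ → PFATransitive δ₂) := by
  subst hn hm hn'
  choose t ht using fun q => Option.isSome_iff_exists.1 (hcomplete q)
  obtain ⟨ε, e, a, h⟩ := exists_counterEncoding δ s t Q' ht
    (fun q hq => Option.some_injective _ ((ht q).symm.trans (hQ's q hq))) hQ'ab
  refine ⟨ε, h.exists_isCareSyncWord (fun q b => hp q _ b (pfaRun_replicate ht p q)) hw₀,
    fun w hw => ?_, h.isSome, h.transitive⟩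
  obtain ⟨v, hv, hvw⟩ := h.exists_isCareSyncWord_length_le hw
  exact (hmin v hv).trans hvw
end

section
/- Let h ≥ 2 and k ≥ h+1. Then C^h A^{k−h} rewrites in one or more steps of the system R_h to C^h A^{k−h−1} B. Furthermore, the smallest possible number of →_{R_h} steps needed to rewrite C^h A^{k−h} to a string ending in B is exactly f_h(k), where f_h satisfies the recursion f_h(k) = 0 for 1 ≤ k ≤ h and f_h(k) = 1 + Σ_{j=1}^{h} f_h(k−j) for k ≥ h+1. -/
/-- The three-letter alphabet {A, B, C}. -/
inductive Letter : Type
  | A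
  | B
  | C
  deriving DecidableEq

open Letter

/-- The rules of the rewrite system `R_h`: `C^i B^{h−i} A → C^i A^{h−i} B`
for `i = 0,…,h`. -/
def RuleH (h : ℕ) (l r : List Letter) : Prop :=
  ∃ i ≤ h,
    l = List.replicate i C ++ List.replicate (h - i) B ++ [A] ∧
    r = List.replicate i C ++ List.replicate (h - i) A ++ [B]

/-- `u →_{R_h} v`: one rewrite step of the system `R_h`. -/
def StepH (h : ℕ) (u v : List Letter) : Prop :=
  ∃ u₁ u₂ l r, RuleH h l r ∧ u = u₁ ++ l ++ u₂ ∧ v = u₁ ++ r ++ u₂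

/-- `StepHN h n u v`: `u` rewrites to `v` in exactly `n` steps of `R_h`. -/
inductive StepHN (h : ℕ) : ℕ → List Letter → List Letter → Prop
  | refl (u : List Letter) : StepHN h 0 u u
  | tail {n : ℕ} {u v w : List Letter} :
      StepHN h n u v → StepH h v w → StepHN h (n + 1) u w

/-- The sum of `f` over the positions of the letter `c` in a word whose first position is `p`. -/
def letterWeight (f : ℕ → ℕ) (c : Letter) : ℕ → List Letter → ℕ
  | _, [] => 0
  | p, x :: xs => (if x = c then f p else 0) + letterWeight f c (p + 1) xs

theorem letterWeight_append (f : ℕ → ℕ) (c : Letter) (p : ℕ) (u v : List Letter) :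
    letterWeight f c p (u ++ v) = letterWeight f c p u + letterWeight f c (p + u.length) v := by
  induction u generalizing p with
  | nil => simp [letterWeight]
  | cons x xs ih =>
    simp only [List.cons_append, letterWeight, ih, List.length_cons]
    rw [show p + 1 + xs.length = p + (xs.length + 1) by omega]
    omega

theorem letterWeight_replicate_self (f : ℕ → ℕ) (c : Letter) (p n : ℕ) :
    letterWeight f c p (List.replicate n c) = ∑ i ∈ Finset.range n, f (p + i) := by
  induction n generalizing p with
  | zero => simp [letterWeight]
  | succ n ih =>
    simp only [List.replicate_succ, letterWeight, ih, Finset.sum_range_succ', if_true]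
    rw [add_comm]
    congr 1
    exact Finset.sum_congr rfl fun i _ => by congr 1; omega

theorem letterWeight_replicate_of_ne (f : ℕ → ℕ) {c d : Letter} (hdc : d ≠ c) (p n : ℕ) :
    letterWeight f c p (List.replicate n d) = 0 := by
  induction n generalizing p with
  | zero => simp [letterWeight]
  | succ n ih => simp [List.replicate_succ, letterWeight, ih, hdc]

theorem StepH.append_right {h : ℕ} {u v : List Letter} (huv : StepH h u v) (w : List Letter) :
    StepH h (u ++ w) (v ++ w) := by
  obtain ⟨u₁, u₂, l, r, hr, rfl, rfl⟩ := huv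
  exact ⟨u₁, u₂ ++ w, l, r, hr, by simp, by simp⟩

/-- A step preserves the weight of `C` and, if that weight is zero, raises the weight of `B`
by exactly one. -/
theorem StepH.letterWeight {h : ℕ} {f : ℕ → ℕ}
    (hfrec : ∀ j : ℕ, h + 1 ≤ j → f j = 1 + ∑ i ∈ Finset.Icc 1 h, f (j - i))
    {u v : List Letter} (huv : StepH h u v) (hu : letterWeight f C 1 u = 0) :
    letterWeight f C 1 v = 0 ∧ letterWeight f B 1 v = letterWeight f B 1 u + 1 := by
  obtain ⟨u₁, u₂, l, r, ⟨i, hi, rfl, rfl⟩, rfl, rfl⟩ := huv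
  have hrec : f (1 + u₁.length + h) = 1 + (∑ t ∈ Finset.range i, f (1 + u₁.length + t) +
      ∑ t ∈ Finset.range (h - i), f (1 + u₁.length + i + t)) := by
    have hsplit := Finset.sum_range_add (fun t => f (1 + u₁.length + t)) i (h - i)
    rw [Nat.add_sub_cancel' hi, ← Finset.sum_range_reflect] at hsplit
    simp only [← add_assoc] at hsplit
    rw [hfrec _ (by omega), ← hsplit, ← Finset.Ico_add_one_right_eq_Icc,
      Finset.sum_Ico_eq_sum_range, Nat.add_sub_cancel]
    congr 1
    refine Finset.sum_congr rfl fun t ht => ?_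
    have := Finset.mem_range.mp ht
    congr 1
    omega
  simp only [letterWeight_append, letterWeight_replicate_self, List.length_append,
    List.length_replicate, letterWeight_replicate_of_ne f (show B ≠ C by decide),
    letterWeight_replicate_of_ne f (show A ≠ C by decide),
    letterWeight_replicate_of_ne f (show A ≠ B by decide),
    letterWeight_replicate_of_ne f (show C ≠ B by decide), _root_.letterWeight,
    List.length_singleton, reduceCtorEq, if_false, if_true] at hu ⊢
  rw [show 1 + u₁.length + (i + (h - i)) = 1 + u₁.length + h by omega]
  omega

theorem StepHN.letterWeight {h : ℕ} {f : ℕ → ℕ}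
    (hfrec : ∀ j : ℕ, h + 1 ≤ j → f j = 1 + ∑ i ∈ Finset.Icc 1 h, f (j - i))
    {n : ℕ} {u v : List Letter} (huv : StepHN h n u v) (hu : letterWeight f C 1 u = 0) :
    letterWeight f C 1 v = 0 ∧ letterWeight f B 1 v = letterWeight f B 1 u + n := by
  induction huv with
  | refl u => exact ⟨hu, rfl⟩
  | tail _ hs ih =>
    obtain ⟨hC, hB⟩ := ih hu
    obtain ⟨hC', hB'⟩ := hs.letterWeight hfrec hC
    exact ⟨hC', by omega⟩

theorem StepHN.length_eq {h n : ℕ} {u v : List Letter} (huv : StepHN h n u v) :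
    v.length = u.length := by
  induction huv with
  | refl u => rfl
  | tail _ hs ih =>
    obtain ⟨u₁, u₂, l, r, ⟨i, hi, rfl, rfl⟩, rfl, rfl⟩ := hs
    simpa using ih

theorem exists_stepHN_of_transGen {h : ℕ} {u v : List Letter}
    (huv : Relation.TransGen (StepH h) u v) : ∃ n, StepHN h n u v := by
  induction huv with
  | single hs => exact ⟨1, .tail (.refl _) hs⟩
  | tail _ hs ih =>
    obtain ⟨n, hn⟩ := ih
    exact ⟨n + 1, .tail hn hs⟩

theorem transGen_stepH_replicate (h m : ℕ) :
    Relation.TransGen (StepH h) (List.replicate h C ++ List.replicate (m + 1) A)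
      (List.replicate h C ++ List.replicate m A ++ [B]) := by
  induction m using Nat.strong_induction_on with
  | _ m ih =>
    have fill : ∀ j ≤ m, Relation.ReflTransGen (StepH h)
        (List.replicate h C ++ List.replicate (m + 1) A)
        (List.replicate h C ++ List.replicate (m - j) A ++ List.replicate j B ++ [A]) := by
      intro j hj
      induction j with
      | zero => simp [List.replicate_succ', Relation.ReflTransGen.refl]
      | succ j ihj =>
        refine (ihj (by omega)).trans ?_
        have key := ((ih (m - (j + 1)) (by omega)).lift (· ++ (List.replicate j B ++ [A]))
          fun _ _ hs => hs.append_right _).to_reflTransGen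
        rw [show m - (j + 1) + 1 = m - j by omega] at key
        simpa [List.replicate_succ] using key
    refine Relation.TransGen.tail' (fill (min m h) (min_le_left _ _)) ?_
    rcases le_total h m with hhm | hmh
    · rw [min_eq_right hhm]
      refine ⟨List.replicate h C ++ List.replicate (m - h) A, [], _, _,
        ⟨0, Nat.zero_le _, rfl, rfl⟩, by simp, ?_⟩
      obtain ⟨d, rfl⟩ := Nat.exists_eq_add_of_le' hhm
      simp [List.replicate_add, -List.replicate_append_replicate]
    · rw [min_eq_left hmh]
      obtain ⟨d, rfl⟩ := Nat.exists_eq_add_of_le hmh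
      exact ⟨List.replicate m C, [], _, _, ⟨d, by omega, rfl, rfl⟩,
        by simp [List.replicate_add, -List.replicate_append_replicate],
        by simp [List.replicate_add, -List.replicate_append_replicate]⟩

/-- For `h ≥ 2` and `k ≥ h+1`: `C^h A^{k−h} →_{R_h}^+ C^h A^{k−h−1} B`, and the smallest
possible number of `→_{R_h}` steps needed to rewrite `C^h A^{k−h}` to a string ending
in `B` is exactly `f_h(k)`, where `f_h(k) = 0` for `1 ≤ k ≤ h` and
`f_h(k) = 1 + Σ_{j=1}^{h} f_h(k−j)` for `k ≥ h+1`. -/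
theorem Rh_min_steps (h k : ℕ) (hh : 2 ≤ h) (hk : h + 1 ≤ k)
    (f : ℕ → ℕ)
    (hf0 : ∀ j : ℕ, 1 ≤ j → j ≤ h → f j = 0)
    (hfrec : ∀ j : ℕ, h + 1 ≤ j → f j = 1 + ∑ i ∈ Finset.Icc 1 h, f (j - i)) :
    Relation.TransGen (StepH h)
        (List.replicate h C ++ List.replicate (k - h) A)
        (List.replicate h C ++ List.replicate (k - h - 1) A ++ [B]) ∧
      (∃ v : List Letter,
          StepHN h (f k) (List.replicate h C ++ List.replicate (k - h) A) v ∧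
          v.getLast? = some B) ∧
      ∀ (n : ℕ) (v : List Letter),
        StepHN h n (List.replicate h C ++ List.replicate (k - h) A) v →
        v.getLast? = some B → f k ≤ n := by
  obtain ⟨m, rfl⟩ : ∃ m, k = h + m + 1 := ⟨k - h - 1, by omega⟩
  have hC : letterWeight f C 1 (List.replicate h C ++ List.replicate (m + 1) A) = 0 := by
    rw [letterWeight_append, letterWeight_replicate_self,
      letterWeight_replicate_of_ne f (by decide), add_zero]
    exact Finset.sum_eq_zero fun i hi =>
      hf0 _ (by omega) (by have := Finset.mem_range.mp hi; omega)
  have hB : letterWeight f B 1 (List.replicate h C ++ List.replicate (m + 1) A) = 0 := by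
    rw [letterWeight_append, letterWeight_replicate_of_ne f (by decide),
      letterWeight_replicate_of_ne f (by decide)]
  rw [show h + m + 1 - h = m + 1 by omega, Nat.add_sub_cancel]
  have htrans := transGen_stepH_replicate h m
  refine ⟨htrans, ?_, ?_⟩
  · obtain ⟨n, hn⟩ := exists_stepHN_of_transGen htrans
    have hw := (hn.letterWeight hfrec hC).2
    rw [hB, letterWeight_append, letterWeight_append, letterWeight_replicate_of_ne f (by decide),
      letterWeight_replicate_of_ne f (by decide)] at hw
    simp only [letterWeight, List.length_append, List.length_replicate, if_true] at hw
    rw [show 1 + (h + m) = h + m + 1 by omega] at hw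
    obtain rfl : n = f (h + m + 1) := by omega
    exact ⟨_, hn, by simp⟩
  · intro n v hn hv
    have hw := (hn.letterWeight hfrec hC).2
    have hlen := hn.length_eq
    obtain ⟨w, rfl⟩ := List.getLast?_eq_some_iff.mp hv
    simp only [List.length_append, List.length_replicate, List.length_singleton] at hlen
    rw [hB, letterWeight_append] at hw
    simp only [letterWeight, if_true] at hw
    rw [show 1 + w.length = h + m + 1 by omega] at hw
    omega
end
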